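/- Let f : S → ℂ be a non-zero solution of the integral Van Vleck equation. Then for all x ∈ S, Σ_{i∈I} Σ_{j∈I} c_i c_j f(x z_i z_j) = −f(x) · Σ_{i∈I} c_i f(z_i). -/

import Mathlib

/-!
A finite combination of Dirac measures is an element `μ` of the monoid algebra `R[S]`, and a
function `f : S → R` extends linearly to `F : R[S] → R`, `ν ↦ ∫ f dν`. By bilinearity, the integral
Van Vleck equation for `f` is the one-point equation
`F (x * τ y * μ) - F (x * y * μ) = 2 * F x * F y` on the multiplicative semigroup of `R[S]`. There
`F` is odd under `τ`. Put `w = x * τ μ * μ`. As `μ` and `τ μ` are central, `w = τ μ * x * μ` and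
`τ w = τ μ * τ x * μ`. The equation at `(τ μ, x)` thus reads `-2 * F w = -2 * F μ * F x`, and at
`(x, μ)` it reads `F w - F (x * μ * μ) = 2 * F x * F μ`.
-/

section OnePoint

/-- The Van Vleck equation for `F : A → R` with respect to an involution `τ` of `A`, shifted by an
element `μ` of `A`. In a convolution algebra `A` the shift becomes an integration against `μ`. -/
def IsVanVleck {A R : Type*} [Mul A] [Ring R] (τ : A → A) (μ : A) (F : A → R) : Prop :=
  ∀ x y : A, F (x * τ y * μ) - F (x * y * μ) = 2 * F x * F y

variable {A R : Type*} [CommRing R] [IsReduced R] {τ : A → A} {μ : A} {F : A → R}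

lemma IsVanVleck.map_involution [Mul A] (h2 : IsLeftRegular (2 : R)) (hτ : τ.Involutive)
    (hF : IsVanVleck τ μ F) (y : A) : F (τ y) = -F y := by
  have two_mul_mul_eq_zero (x : A) : 2 * F x * (F (τ y) + F y) = 0 := by
    have h := hF x (τ y)
    rw [hτ] at h
    linear_combination -hF x y - h
  have sq_eq_zero : (F (τ y) + F y) ^ 2 = 0 := by
    refine h2 (?_ : 2 * (F (τ y) + F y) ^ 2 = 2 * 0)
    linear_combination two_mul_mul_eq_zero (τ y) + two_mul_mul_eq_zero y
  exact eq_neg_of_add_eq_zero_left (pow_eq_zero_iff two_ne_zero |>.1 sq_eq_zero)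

lemma commute_involution_of_commute [Mul A] (hτmul : ∀ x y, τ (x * y) = τ y * τ x)
    (hτ : τ.Involutive) (hμ : ∀ x, Commute μ x) (x : A) : Commute (τ μ) x :=
  calc
    τ μ * x = τ (τ x * μ) := by rw [hτmul, hτ]
    _ = τ (μ * τ x) := by rw [(hμ (τ x)).eq]
    _ = x * τ μ := by rw [hτmul, hτ]

variable [Semigroup A]

lemma IsVanVleck.map_mul_involution_mul (h2 : IsLeftRegular (2 : R))
    (hτmul : ∀ x y, τ (x * y) = τ y * τ x) (hτ : τ.Involutive) (hμ : ∀ x, Commute μ x)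
    (hF : IsVanVleck τ μ F) (x : A) : F (x * τ μ * μ) = F x * F μ := by
  have involution_eq : τ (x * τ μ * μ) = τ μ * τ x * μ := by
    rw [hτmul, hτmul, hτ, (hμ (τ x)).eq, mul_assoc]
  have h := hF (τ μ) x
  rw [← involution_eq, (commute_involution_of_commute hτmul hτ hμ x).eq,
    hF.map_involution h2 hτ, hF.map_involution h2 hτ] at h
  refine h2 (?_ : 2 * F (x * τ μ * μ) = 2 * (F x * F μ))
  linear_combination -h

theorem IsVanVleck.map_mul_mul (h2 : IsLeftRegular (2 : R))
    (hτmul : ∀ x y, τ (x * y) = τ y * τ x) (hτ : τ.Involutive) (hμ : ∀ x, Commute μ x)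
    (hF : IsVanVleck τ μ F) (x : A) : F (x * μ * μ) = -(F x * F μ) := by
  linear_combination hF.map_mul_involution_mul h2 hτmul hτ hμ x - hF x μ

end OnePoint

open MonoidAlgebra

section Integral

variable {R S : Type*}

lemma mapDomain_mul_rev {T : Type*} [CommSemiring R] [Mul S] [Mul T] {τ : S → T}
    (hτmul : ∀ x y, τ (x * y) = τ y * τ x) (ν ρ : R[S]) :
    mapDomain τ (ν * ρ) = mapDomain τ ρ * mapDomain τ ν := by
  induction ν using MonoidAlgebra.induction_linear with
  | zero => simp
  | add ν₁ ν₂ h₁ h₂ => simp only [add_mul, mul_add, mapDomain_add, h₁, h₂]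
  | single s a =>
    induction ρ using MonoidAlgebra.induction_linear with
    | zero => simp
    | add ρ₁ ρ₂ h₁ h₂ => simp only [add_mul, mul_add, mapDomain_add, h₁, h₂]
    | single t b => simp only [single_mul_single, mapDomain_single, hτmul, mul_comm]

lemma mapDomain_involutive [Semiring R] {τ : S → S} (hτ : τ.Involutive) :
    (mapDomain τ : R[S] → R[S]).Involutive := by
  intro ν
  induction ν using MonoidAlgebra.induction_linear with
  | zero => simp
  | add ν₁ ν₂ h₁ h₂ => simp only [mapDomain_add, h₁, h₂]
  | single s a => simp only [mapDomain_single, hτ s]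

/-- The integral of `f` against `ν ∈ R[S]`, where `single s a` stands for `a` times the Dirac
measure at `s`, as a linear functional of `ν`. -/
noncomputable def discreteIntegral [Semiring R] (f : S → R) : R[S] →ₗ[R] R :=
  Finsupp.linearCombination R f ∘ₗ (coeffLinearEquiv R).toLinearMap

lemma discreteIntegral_single [Semiring R] (f : S → R) (s : S) (a : R) :
    discreteIntegral f (single s a) = a * f s := by
  simp [discreteIntegral]

/-- The integral Van Vleck equation for `f : S → R`, an involution `τ` of `S` and `μ ∈ R[S]`:
`∫ f (x τ(y) t) dμ(t) - ∫ f (x y t) dμ(t) = 2 f(x) f(y)`. The integral of the translate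
`t ↦ f (s t)` against `μ` is encoded as the integral of `f` against `δ_s * μ`. -/
def IsIntegralVanVleck [Mul S] [Ring R] (τ : S → S) (μ : R[S]) (f : S → R) : Prop :=
  ∀ x y : S,
    discreteIntegral f (single (x * τ y) 1 * μ) - discreteIntegral f (single (x * y) 1 * μ)
      = 2 * f x * f y

lemma single_mul_single_mul [Semiring R] [Mul S] (s t : S) (a b : R) (μ : R[S]) :
    single s a * single t b * μ = (a * b) • (single (s * t) 1 * μ) := by
  rw [single_mul_single, ← smul_mul_assoc, smul_single, smul_eq_mul, mul_one]

lemma IsIntegralVanVleck.isVanVleck_discreteIntegral [CommRing R] [Mul S]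
    {τ : S → S} {μ : R[S]} {f : S → R} (hf : IsIntegralVanVleck τ μ f) :
    IsVanVleck (mapDomain τ) μ (discreteIntegral f) := by
  intro ν ρ
  induction ν using MonoidAlgebra.induction_linear with
  | zero => simp
  | add ν₁ ν₂ h₁ h₂ =>
    simp only [add_mul, map_add]
    linear_combination h₁ + h₂
  | single s a =>
    induction ρ using MonoidAlgebra.induction_linear with
    | zero => simp
    | add ρ₁ ρ₂ h₁ h₂ =>
      simp only [mapDomain_add, add_mul, mul_add, map_add]
      linear_combination h₁ + h₂
    | single t b =>
      simp only [mapDomain_single, single_mul_single_mul, map_smul, smul_eq_mul,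
        discreteIntegral_single]
      linear_combination a * b * hf s t

end Integral

section DiracSum

variable {R S ι : Type*} [Semiring R]

/-- The measure `∑ i ∈ I, c i • δ_{z i}` as an element of the monoid algebra. -/
noncomputable def diracSum (I : Finset ι) (c : ι → R) (z : ι → S) : R[S] :=
  ∑ i ∈ I, single (z i) (c i)

variable {I : Finset ι} {c : ι → R} {z : ι → S}

lemma diracSum_commute {R : Type*} [CommSemiring R] [Mul S] {c : ι → R}
    (hz : ∀ i ∈ I, ∀ s, Commute (z i) s) (ν : R[S]) : Commute (diracSum I c z) ν :=
  Commute.sum_left I _ ν fun i hi ↦ single_commute (hz i hi) (Commute.all (c i)) ν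

lemma discreteIntegral_diracSum (f : S → R) :
    discreteIntegral f (diracSum I c z) = ∑ i ∈ I, c i * f (z i) := by
  simp only [diracSum, map_sum, discreteIntegral_single]

lemma single_mul_diracSum [Mul S] (s : S) (a : R) :
    single s a * diracSum I c z = diracSum I (fun i ↦ a * c i) fun i ↦ s * z i := by
  simp only [diracSum, Finset.mul_sum, single_mul_single]

lemma discreteIntegral_single_mul_diracSum [Mul S] (f : S → R) (s : S) :
    discreteIntegral f (single s 1 * diracSum I c z) = ∑ i ∈ I, c i * f (s * z i) := by
  simp only [single_mul_diracSum, discreteIntegral_diracSum, one_mul]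

lemma discreteIntegral_single_mul_diracSum_mul_diracSum [Mul S] (f : S → R) (s : S) :
    discreteIntegral f (single s 1 * diracSum I c z * diracSum I c z)
      = ∑ i ∈ I, ∑ j ∈ I, c i * c j * f (s * z i * z j) := by
  rw [single_mul_diracSum]
  simp only [diracSum, Finset.sum_mul_sum, single_mul_single, map_sum,
    discreteIntegral_single, one_mul]

end DiracSum

theorem stmt_4_general {R S : Type*} [CommRing R] [IsReduced R] [Semigroup S]
    (h2 : IsLeftRegular (2 : R)) {τ : S → S} (hτmul : ∀ x y, τ (x * y) = τ y * τ x)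
    (hτ : τ.Involutive) {μ : R[S]} (hμ : ∀ ν, Commute μ ν) {f : S → R}
    (hf : IsIntegralVanVleck τ μ f) (x : S) :
    discreteIntegral f (single x 1 * μ * μ) = -(f x * discreteIntegral f μ) := by
  simpa only [discreteIntegral_single, one_mul] using
    hf.isVanVleck_discreteIntegral.map_mul_mul h2 (mapDomain_mul_rev hτmul)
      (mapDomain_involutive hτ) hμ (single x 1)

theorem stmt_4 {S ι : Type*} [Semigroup S] (τ : S → S)
    (hτmul : ∀ x y : S, τ (x * y) = τ y * τ x)
    (hτinv : ∀ x : S, τ (τ x) = x)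
    (I : Finset ι) (c : ι → ℂ) (z : ι → S)
    (hz : ∀ i ∈ I, ∀ s : S, z i * s = s * z i)
    (f : S → ℂ) (hf : f ≠ 0)
(hVV : ∀ x y : S,
      (∑ i ∈ I, c i * f (x * τ y * z i)) - (∑ i ∈ I, c i * f (x * y * z i))
        = 2 * f x * f y) :
    ∀ x : S, (∑ i ∈ I, ∑ j ∈ I, c i * c j * f (x * z i * z j))
      = -(f x * ∑ i ∈ I, c i * f (z i)) := by
  intro x
  have hf' : IsIntegralVanVleck τ (diracSum I c z) f := by
    simpa only [IsIntegralVanVleck, discreteIntegral_single_mul_diracSum] using hVV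
  simpa only [discreteIntegral_single_mul_diracSum_mul_diracSum, discreteIntegral_diracSum] using
    stmt_4_general (mul_right_injective₀ two_ne_zero) hτmul hτinv (diracSum_commute hz) hf' x
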